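/- Suppose the frequency vector ω⃗ satisfies the Strong Diophantine Condition with constants B₀ > 0 and μ̂ > 0. Then for every nondegenerate d×l integer matrix N and every n with 2 ≤ n ≤ d, the Euclidean distance from θ_n(ω⃗,N) to the linear span of θ₁(ω⃗,N),…,θ_{n−1}(ω⃗,N) is at least (2/√d)^{d−1}·B₀·‖N‖_*^{−(μ̂+d−1)}; in particular, the sine of the angle between θ_n and span{θ₁,…,θ_{n−1}} (i.e., the distance divided by ‖θ_n‖) is at least (2/√d)^{d}·B₀·‖N‖_*^{−(μ̂+d)}. -/

import Mathlib

open MeasureTheory Set Metric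

noncomputable section

/-- `θ_j(ω⃗,N) := ∑_k n_{jk} ω_k ∈ ℝ^d`. -/
def theta {d l : ℕ} (ω : Fin l → EuclideanSpace ℝ (Fin d))
    (N : Matrix (Fin d) (Fin l) ℤ) (j : Fin d) : EuclideanSpace ℝ (Fin d) :=
  ∑ k, (N j k : ℝ) • ω k

/-- Determinant of the `d×d` matrix whose columns are `θ₁,…,θ_d`. -/
def thetaDet {d l : ℕ} (ω : Fin l → EuclideanSpace ℝ (Fin d))
    (N : Matrix (Fin d) (Fin l) ℤ) : ℝ :=
  Matrix.det (Matrix.of fun i j : Fin d => theta ω N j i)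

/-- `‖N‖_* := ∑_{j,k} |n_{jk}|`, as a real number. -/
def starNorm {d l : ℕ} (N : Matrix (Fin d) (Fin l) ℤ) : ℝ :=
  ((∑ j, ∑ k, (N j k).natAbs : ℕ) : ℝ)

/-- The Strong Diophantine Condition with constants `B₀ > 0` and exponent `μhat`. -/
def SDC (d l : ℕ) (ω : Fin l → EuclideanSpace ℝ (Fin d)) (B₀ μhat : ℝ) : Prop :=
  ∀ N : Matrix (Fin d) (Fin l) ℤ, (N.map fun z => (z : ℝ)).rank = d →
    B₀ * starNorm N ^ (-μhat) < |thetaDet ω N|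

theorem aux_norm_theta {d l : ℕ} (ω : Fin l → EuclideanSpace ℝ (Fin d))
    (hbox : ∀ j i, ω j i ∈ Set.Icc (-(1 : ℝ)/2) (1/2))
    (N : Matrix (Fin d) (Fin l) ℤ) (j : Fin d) :
    ‖theta ω N j‖ ≤ Real.sqrt d / 2 * starNorm N := by
  have hω : ∀ k, ‖ω k‖ ≤ Real.sqrt d / 2 := by
    intro k
    rw [EuclideanSpace.norm_eq]
    apply Real.sqrt_le_iff.mpr
    refine ⟨by positivity, ?_⟩
    have : ∀ i ∈ Finset.univ, ‖ω k i‖ ^ 2 ≤ (1/4 : ℝ) := by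
      intro i _
      obtain ⟨h1, h2⟩ := hbox k i
      rw [Real.norm_eq_abs, sq_abs]
      nlinarith
    refine (Finset.sum_le_sum this).trans ?_
    rw [div_pow, Real.sq_sqrt (by positivity)]
    simp
    linarith
  have hS : ∑ k, |(N j k : ℝ)| ≤ starNorm N := by
    unfold starNorm
    push_cast
    simp only [Nat.cast_natAbs, Int.cast_abs]
    exact Finset.single_le_sum (f := fun j => ∑ k, |(N j k : ℝ)|)
      (fun i _ => Finset.sum_nonneg fun _ _ => abs_nonneg _) (Finset.mem_univ j)
  calc ‖theta ω N j‖ ≤ ∑ k, ‖(N j k : ℝ) • ω k‖ := norm_sum_le _ _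
    _ ≤ ∑ k, |(N j k : ℝ)| * (Real.sqrt d / 2) := by
        refine Finset.sum_le_sum fun k _ => ?_
        rw [norm_smul, Real.norm_eq_abs]
        exact mul_le_mul_of_nonneg_left (hω k) (abs_nonneg _)
    _ = Real.sqrt d / 2 * ∑ k, |(N j k : ℝ)| := by rw [← Finset.sum_mul, mul_comm]
    _ ≤ _ := mul_le_mul_of_nonneg_left hS (by positivity)

theorem aux_hadamard {d : ℕ} (v : Fin d → EuclideanSpace ℝ (Fin d)) :
    |(EuclideanSpace.basisFun (Fin d) ℝ).toBasis.det v| ≤ ∏ i, ‖v i‖ := by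
  have : Fact (Module.finrank ℝ (EuclideanSpace ℝ (Fin d)) = d) := ⟨by simp⟩
  have h := (EuclideanSpace.basisFun (Fin d) ℝ).toBasis.orientation.abs_volumeForm_apply_le v
  rwa [Orientation.volumeForm_robust _ (EuclideanSpace.basisFun (Fin d) ℝ) rfl] at h

theorem aux_det {d l : ℕ} (ω : Fin l → EuclideanSpace ℝ (Fin d))
    (N : Matrix (Fin d) (Fin l) ℤ) :
    thetaDet ω N = (EuclideanSpace.basisFun (Fin d) ℝ).toBasis.det (theta ω N) := by
  rw [Module.Basis.det_apply]
  unfold thetaDet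
  congr 1

theorem aux_dist {d : ℕ} (v : Fin d → EuclideanSpace ℝ (Fin d)) (n : Fin d) (R : ℝ)
    (hR : ∀ i, ‖v i‖ ≤ R) (y : EuclideanSpace ℝ (Fin d))
    (hy : y ∈ Submodule.span ℝ {x | ∃ i : Fin d, (i : ℕ) < (n : ℕ) ∧ v i = x}) :
    |(EuclideanSpace.basisFun (Fin d) ℝ).toBasis.det v| ≤ R ^ (d - 1) * dist (v n) y := by
  set D := (EuclideanSpace.basisFun (Fin d) ℝ).toBasis.det
  have h0 : D (Function.update v n y) = 0 := by
    induction hy using Submodule.span_induction with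
    | mem x hx =>
      obtain ⟨i, hi, rfl⟩ := hx
      exact D.map_update_self v (by intro h; rw [h] at hi; exact lt_irrefl _ hi)
    | zero => exact D.map_update_zero v n
    | add x y _ _ hx hy => rw [D.map_update_add, hx, hy, add_zero]
    | smul a x _ hx => rw [D.map_update_smul, hx, smul_zero]
  have h1 : D v = D (Function.update v n (v n - y)) := by
    rw [D.map_update_sub, h0, Function.update_eq_self, sub_zero]
  rw [h1]
  refine (aux_hadamard _).trans ?_
  rw [← Finset.prod_erase_mul _ _ (Finset.mem_univ n), Function.update_self, ← dist_eq_norm]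
  refine mul_le_mul_of_nonneg_right ?_ dist_nonneg
  calc _ ≤ ∏ i ∈ Finset.univ.erase n, R := by
        refine Finset.prod_le_prod (fun _ _ => norm_nonneg _) fun i hi => ?_
        rw [Function.update_of_ne (Finset.ne_of_mem_erase hi)]
        exact hR i
    _ = _ := by simp [Finset.card_erase_of_mem]

/-- Under the SDC, for every nondegenerate `N` and every `n` with
`2 ≤ n ≤ d` (here `n : Fin d` with `1 ≤ n`, using `0`-based indexing of `θ`), the
distance from `θ_n` to the span of `θ₁,…,θ_{n−1}` is at least
`(2/√d)^{d−1}·B₀·‖N‖_*^{−(μhat+d−1)}`, and the sine of the corresponding angle,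
i.e. this distance divided by `‖θ_n‖`, is at least `(2/√d)^d·B₀·‖N‖_*^{−(μhat+d)}`. -/
theorem sdc_angles (d l : ℕ) (hd : 2 ≤ d) (hl : d < l)
    (B₀ μhat : ℝ) (hB₀ : 0 < B₀) (hμ : 0 < μhat)
    (ω : Fin l → EuclideanSpace ℝ (Fin d))
    (hbox : ∀ j i, ω j i ∈ Set.Icc (-(1 : ℝ)/2) (1/2))
    (hSDC : SDC d l ω B₀ μhat)
    (N : Matrix (Fin d) (Fin l) ℤ)
    (hN : (N.map fun z => (z : ℝ)).rank = d)
    (n : Fin d) (hn : 1 ≤ (n : ℕ)) :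
    (2 / Real.sqrt d) ^ (d - 1) * B₀ * starNorm N ^ (-(μhat + d - 1)) ≤
      Metric.infDist (theta ω N n)
        (Submodule.span ℝ {x | ∃ i : Fin d, (i : ℕ) < (n : ℕ) ∧ theta ω N i = x} :
          Set (EuclideanSpace ℝ (Fin d))) ∧
    (2 / Real.sqrt d) ^ d * B₀ * starNorm N ^ (-(μhat + d)) ≤
      Metric.infDist (theta ω N n)
        (Submodule.span ℝ {x | ∃ i : Fin d, (i : ℕ) < (n : ℕ) ∧ theta ω N i = x} :
          Set (EuclideanSpace ℝ (Fin d))) / ‖theta ω N n‖ := by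
  have hdpos : (0:ℝ) < d := by exact_mod_cast (by omega : 0 < d)
  have hs : 0 < Real.sqrt d := Real.sqrt_pos.mpr hdpos
  have hS : 0 < starNorm N := by
    unfold starNorm
    rw [Nat.cast_pos]
    by_contra h
    have h0 : ∑ j, ∑ k, (N j k).natAbs = 0 := by omega
    have hz : (N.map fun z => (z : ℝ)) = 0 := by
      ext j k
      have h1 := (Finset.sum_eq_zero_iff.mp h0) j (Finset.mem_univ j)
      have h2 := (Finset.sum_eq_zero_iff.mp h1) k (Finset.mem_univ k)
      simpa using h2
    rw [hz, Matrix.rank_zero] at hN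
    omega
  set S := starNorm N
  set R := Real.sqrt d / 2 * S with hRdef
  have hRpos : 0 < R := by positivity
  have hnorm : ∀ i, ‖theta ω N i‖ ≤ R := aux_norm_theta ω hbox N
  have hdet := hSDC N hN
  rw [aux_det] at hdet
  have hθ : 0 < ‖theta ω N n‖ := by
    rw [norm_pos_iff]
    intro h
    rw [AlternatingMap.map_coord_zero _ n h, abs_zero] at hdet
    have : 0 < B₀ * S ^ (-μhat) := mul_pos hB₀ (Real.rpow_pos_of_pos hS _)
    exact absurd hdet (not_lt.mpr this.le)
  have hinv : 2 / Real.sqrt d = S * R⁻¹ := by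
    rw [hRdef]; field_simp
  have hpow : ∀ k : ℕ, ∀ e : ℝ, e = μhat + k →
      (2 / Real.sqrt d) ^ k * B₀ * S ^ (-e) = (B₀ * S ^ (-μhat)) / R ^ k := by
    intro k e he
    rw [he, neg_add, Real.rpow_add hS, Real.rpow_neg hS.le (k:ℝ), Real.rpow_natCast, hinv,
      mul_pow, inv_pow]
    field_simp
  have first : (2 / Real.sqrt d) ^ (d - 1) * B₀ * S ^ (-(μhat + d - 1)) ≤
      Metric.infDist (theta ω N n)
        (Submodule.span ℝ {x | ∃ i : Fin d, (i : ℕ) < (n : ℕ) ∧ theta ω N i = x} :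
          Set (EuclideanSpace ℝ (Fin d))) := by
    rw [Metric.le_infDist ⟨0, Submodule.zero_mem _⟩]
    intro y hy
    rw [hpow (d - 1) _ (by rw [Nat.cast_sub (by omega)]; push_cast; ring),
      div_le_iff₀ (by positivity), mul_comm (dist _ _)]
    exact hdet.le.trans (aux_dist (theta ω N) n R hnorm y hy)
  refine ⟨first, ?_⟩
  rw [hpow (d - 1) _ (by rw [Nat.cast_sub (by omega)]; push_cast; ring)] at first
  rw [hpow d _ rfl, le_div_iff₀ hθ]
  refine le_trans ?_ first
  have hd1 : R ^ d = R ^ (d - 1) * R := by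
    rw [← pow_succ]; congr 1; omega
  have hA : 0 ≤ B₀ * S ^ (-μhat) / R ^ d := 
    div_nonneg (mul_pos hB₀ (Real.rpow_pos_of_pos hS _)).le (by positivity)
  refine (mul_le_mul_of_nonneg_left (hnorm n) hA).trans (le_of_eq ?_)
  rw [hd1]
  field_simp

end
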